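/- Let n ≥ 2. There exist constants 0 < c ≤ C such that for every x in the open unit ball B of ℝⁿ, c ≤ (1−|x|)·∫_{∂B} |x−θ|^{−n} dH^{n−1}(θ) ≤ C. -/

import Mathlib

open MeasureTheory Real Set

/-!
The surface measure `μ` of the unit sphere `S` in dimension `m + 1` is Ahlfors `m`-regular:
`μ (S ∩ ball z r)` is comparable to `r ^ m` for `z ∈ S` and `0 < r ≤ 1`. Indeed the inversion of
radius `2` centred at `-z` exchanges `S` with its tangent hyperplane at `z`, fixes `z`, and is
bi-Lipschitz near `z`. If `δ = 1 - ‖x‖`, every `θ ∈ S` has `δ ≤ dist x θ`, so the layer cake formula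
and the upper regularity bound give `∫ (dist x θ ^ s)⁻¹ ∂μ ≲ δ ^ (m - s)` for every `s > m`.
Conversely, a cap of radius `δ` around the point of `S` nearest to `x` already contributes a
constant multiple of `δ ^ (m - s)`.
-/

open Metric Module AffineSubspace
open EuclideanGeometry hiding mem_sphere
open scoped ENNReal NNReal

lemma setLIntegral_Ioc_rpow {a b : ℝ} (ha : -1 < a) (hb : 0 ≤ b) :
    ∫⁻ t in Ioc 0 b, ENNReal.ofReal (t ^ a) = ENNReal.ofReal (b ^ (a + 1) / (a + 1)) := by
  rw [← ofReal_integral_eq_lintegral_ofReal, ← intervalIntegral.integral_of_le hb,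
    integral_rpow (.inl ha), zero_rpow (by linarith), sub_zero]
  · exact (intervalIntegral.intervalIntegrable_rpow' ha).1
  · filter_upwards [ae_restrict_mem measurableSet_Ioc] with t ht using rpow_nonneg ht.1.le a

section InversePower

variable {X : Type*} [PseudoMetricSpace X] [MeasurableSpace X] [OpensMeasurableSpace X]
  {μ : Measure X} {x : X} {s δ : ℝ}

lemma measurable_dist_rpow_inv (x : X) (s : ℝ) : Measurable fun θ ↦ (dist x θ ^ s)⁻¹ :=
  ((continuous_const.dist continuous_id).measurable.pow_const s).inv

omit [MeasurableSpace X] [OpensMeasurableSpace X] in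
lemma setOf_lt_dist_rpow_inv_subset_ball (hs : 0 < s) {t : ℝ} (ht : 0 < t) :
    {θ | t < (dist x θ ^ s)⁻¹} ⊆ ball x (t⁻¹ ^ s⁻¹) := by
  intro θ hθ
  have hpos : 0 < dist x θ ^ s := inv_pos.1 (ht.trans hθ)
  rw [mem_ball', lt_rpow_inv_iff_of_pos dist_nonneg (by positivity) hs]
  exact (lt_inv_comm₀ ht hpos).1 hθ

lemma lintegral_dist_rpow_inv_le {K : ℝ≥0} {d : ℝ} (hs : 0 < s) (hds : d < s) (hδ : 0 < δ)
    (hball : ∀ r, δ ≤ r → μ (ball x r) ≤ K * ENNReal.ofReal (r ^ d))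
    (hdist : ∀ᵐ θ ∂μ, δ ≤ dist x θ) :
    ∫⁻ θ, ENNReal.ofReal ((dist x θ ^ s)⁻¹) ∂μ ≤
      K * ENNReal.ofReal (s / (s - d) * δ ^ (d - s)) := by
  have superlevel_le : ∀ t ∈ Ioi (0 : ℝ), μ {θ | t < (dist x θ ^ s)⁻¹} ≤
      (Ioc 0 (δ⁻¹ ^ s)).indicator (fun t ↦ K * ENNReal.ofReal (t ^ (-(d / s)))) t := by
    intro t (ht : 0 < t)
    by_cases htδ : t ≤ δ⁻¹ ^ s
    · have hδr : δ ≤ t⁻¹ ^ s⁻¹ := by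
        rwa [le_rpow_inv_iff_of_pos hδ.le (by positivity) hs, le_inv_comm₀ (by positivity) ht,
          ← inv_rpow hδ.le]
      have hrd : (t⁻¹ ^ s⁻¹) ^ d = t ^ (-(d / s)) := by
        rw [inv_rpow ht.le, ← rpow_neg ht.le, ← rpow_mul ht.le]
        ring_nf
      rw [indicator_of_mem (mem_Ioc.2 ⟨ht, htδ⟩), ← hrd]
      exact (measure_mono (setOf_lt_dist_rpow_inv_subset_ball hs ht)).trans (hball _ hδr)
    · suffices μ {θ | t < (dist x θ ^ s)⁻¹} = 0 by simp [this]
      rw [measure_eq_zero_iff_ae_notMem]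
      filter_upwards [hdist] with θ hθ
      rw [not_le, inv_rpow hδ.le] at htδ
      exact not_lt.2 (le_trans (by gcongr) htδ.le)
  calc ∫⁻ θ, ENNReal.ofReal ((dist x θ ^ s)⁻¹) ∂μ
      = ∫⁻ t in Ioi 0, μ {θ | t < (dist x θ ^ s)⁻¹} :=
        lintegral_eq_lintegral_meas_lt μ (ae_of_all _ fun θ ↦ by positivity)
          (measurable_dist_rpow_inv x s).aemeasurable
    _ ≤ ∫⁻ t in Ioi 0,
          (Ioc 0 (δ⁻¹ ^ s)).indicator (fun t ↦ K * ENNReal.ofReal (t ^ (-(d / s)))) t :=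
        setLIntegral_mono' measurableSet_Ioi superlevel_le
    _ = K * ∫⁻ t in Ioc 0 (δ⁻¹ ^ s), ENNReal.ofReal (t ^ (-(d / s))) := by
        rw [setLIntegral_indicator measurableSet_Ioc, inter_eq_left.2 Ioc_subset_Ioi_self,
          lintegral_const_mul' _ _ ENNReal.coe_ne_top]
    _ = K * ENNReal.ofReal (s / (s - d) * δ ^ (d - s)) := by
        have hexp : s * (-(d / s) + 1) = s - d := by field_simp; ring
        have hratio : -(d / s) + 1 = (s - d) / s := by field_simp; ring
        rw [setLIntegral_Ioc_rpow (by linarith [(div_lt_one hs).2 hds]) (by positivity),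
          ← rpow_mul (by positivity), hexp, inv_rpow hδ.le, ← rpow_neg hδ.le, neg_sub, hratio,
          div_eq_inv_mul _ ((s - d) / s), inv_div]

lemma measure_ball_le_lintegral_dist_rpow_inv (hs : 0 ≤ s) (hdist : ∀ᵐ θ ∂μ, 0 < dist x θ) (r : ℝ) :
    ENNReal.ofReal ((r ^ s)⁻¹) * μ (ball x r) ≤ ∫⁻ θ, ENNReal.ofReal ((dist x θ ^ s)⁻¹) ∂μ := by
  have ball_le : μ (ball x r) ≤
      μ {θ | ENNReal.ofReal ((r ^ s)⁻¹) ≤ ENNReal.ofReal ((dist x θ ^ s)⁻¹)} := by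
    refine measure_mono_ae ?_
    filter_upwards [hdist] with θ hpos (hθ : θ ∈ ball x r)
    have hle : dist x θ ≤ r := (mem_ball'.1 hθ).le
    refine ENNReal.ofReal_le_ofReal ?_
    gcongr
  exact (mul_le_mul_right ball_le _).trans
    (mul_meas_ge_le_lintegral (measurable_dist_rpow_inv x s).ennreal_ofReal _)

end InversePower

lemma isAddHaarMeasure_hausdorffMeasure_euclideanSpace (m : ℕ) :
    (μH[(m : ℝ)] : Measure (EuclideanSpace ℝ (Fin m))).IsAddHaarMeasure := by
  simpa using isAddHaarMeasure_hausdorffMeasure (E := EuclideanSpace ℝ (Fin m))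

section Inversion

variable {V P : Type*} [NormedAddCommGroup V] [InnerProductSpace ℝ V] [MetricSpace P]
  [NormedAddTorsor V P]

lemma hausdorffMeasure_affineSubspace_inter_ball [MeasurableSpace P] [BorelSpace P]
    {A : AffineSubspace ℝ P} [FiniteDimensional ℝ A.direction] {m : ℕ}
    (hA : finrank ℝ A.direction = m) {p : P} (hp : p ∈ A) {r : ℝ} (hr : 0 < r) :
    μH[(m : ℝ)] ((A : Set P) ∩ ball p r) =
      ENNReal.ofReal (r ^ m) * μH[(m : ℝ)] (ball (0 : EuclideanSpace ℝ (Fin m)) 1) := by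
  subst hA
  set m := finrank ℝ A.direction
  let e : EuclideanSpace ℝ (Fin m) ≃ₗᵢ[ℝ] A.direction :=
    (stdOrthonormalBasis ℝ A.direction).repr.symm
  let φ : EuclideanSpace ℝ (Fin m) → P := fun v ↦ (e v : V) +ᵥ p
  have hφ : Isometry φ := (IsometryEquiv.vaddConst p).isometry.comp
    (A.direction.subtypeₗᵢ.isometry.comp e.isometry)
  have himage : φ '' ball 0 r = (A : Set P) ∩ ball p r := by
    ext q
    constructor
    · rintro ⟨v, hv, rfl⟩
      exact ⟨vadd_mem_of_mem_direction (e v).2 hp, by simpa [φ, Submodule.norm_coe] using hv⟩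
    · rintro ⟨hqA, hq⟩
      refine ⟨e.symm ⟨q -ᵥ p, vsub_mem_direction hqA hp⟩, ?_, by simp [φ]⟩
      simpa [dist_eq_norm_vsub V] using hq
  have haar := isAddHaarMeasure_hausdorffMeasure_euclideanSpace m
  rw [← himage, hφ.hausdorffMeasure_image (.inl m.cast_nonneg), Measure.addHaar_ball_of_pos _ _ hr,
    finrank_euclideanSpace_fin]

lemma lipschitzOnWith_inversion (c : P) (R : ℝ) {ρ : ℝ} (hρ : 0 < ρ) :
    LipschitzOnWith (R ^ 2 / ρ ^ 2).toNNReal (inversion c R) {x | ρ ≤ dist x c} := by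
  refine LipschitzOnWith.of_dist_le_mul fun x (hx : ρ ≤ dist x c) y (hy : ρ ≤ dist y c) ↦ ?_
  rw [dist_inversion_inversion (dist_pos.1 (hρ.trans_le hx)) (dist_pos.1 (hρ.trans_le hy)),
    coe_toNNReal _ (by positivity), sq ρ]
  gcongr

end Inversion

section Sphere

variable {E : Type*} [NormedAddCommGroup E] [InnerProductSpace ℝ E] {z : E}

/-- The tangent hyperplane at `z` to the unit sphere, encoded as the image of the sphere under the
inversion of radius `2` centred at the antipode `-z`. -/
noncomputable def tangentHyperplane (z : E) : AffineSubspace ℝ E :=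
  perpBisector (-z) (inversion (-z) 2 0)

omit [InnerProductSpace ℝ E] in
lemma zero_ne_antipode (hz : ‖z‖ = 1) : 0 ≠ -z := by
  intro h
  rw [← norm_neg, ← h, norm_zero] at hz
  exact zero_ne_one hz

lemma dist_antipode (z : E) : dist z (-z) = 2 * ‖z‖ := by
  rw [dist_eq_norm, sub_neg_eq_add, ← two_smul ℝ, norm_smul, norm_two]

lemma ne_antipode (hz : ‖z‖ = 1) : z ≠ -z :=
  dist_pos.1 (by rw [dist_antipode, hz]; norm_num)

lemma inversion_antipode_self (hz : ‖z‖ = 1) : inversion (-z) 2 z = z :=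
  inversion_of_mem_sphere (by rw [mem_sphere, dist_antipode, hz, mul_one])

lemma inversion_mem_tangentHyperplane_iff (hz : ‖z‖ = 1) {θ : E} (hθ : θ ≠ -z) :
    inversion (-z) 2 θ ∈ tangentHyperplane z ↔ θ ∈ sphere (0 : E) 1 := by
  rw [tangentHyperplane,
    inversion_mem_perpBisector_inversion_iff two_ne_zero hθ (zero_ne_antipode hz),
    dist_zero_left, norm_neg, hz, mem_sphere]

lemma self_mem_tangentHyperplane (hz : ‖z‖ = 1) : z ∈ tangentHyperplane z := by
  have h := (inversion_mem_tangentHyperplane_iff hz (ne_antipode hz)).2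
    (mem_sphere_zero_iff_norm.2 hz)
  rwa [inversion_antipode_self hz] at h

lemma finrank_direction_tangentHyperplane {m : ℕ} [Fact (finrank ℝ E = m + 1)] (hz : ‖z‖ = 1) :
    finrank ℝ (tangentHyperplane z).direction = m := by
  rw [tangentHyperplane, direction_perpBisector]
  exact Submodule.finrank_orthogonal_span_singleton
    (vsub_ne_zero.2 ((inversion_eq_center two_ne_zero).not.2 (zero_ne_antipode hz)))

lemma ne_antipode_of_mem_tangentHyperplane (hz : ‖z‖ = 1) {w : E}
    (hw : w ∈ tangentHyperplane z) : w ≠ -z := by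
  rintro rfl
  exact zero_ne_antipode hz ((center_eq_inversion two_ne_zero).1 (left_mem_perpBisector.1 hw))

lemma inversion_mem_sphere_of_mem_tangentHyperplane (hz : ‖z‖ = 1) {w : E}
    (hw : w ∈ tangentHyperplane z) : inversion (-z) 2 w ∈ sphere (0 : E) 1 := by
  have hne := ne_antipode_of_mem_tangentHyperplane hz hw
  rwa [← inversion_mem_tangentHyperplane_iff hz ((inversion_eq_center two_ne_zero).not.2 hne),
    inversion_inversion _ two_ne_zero]

lemma two_le_dist_antipode_of_mem_tangentHyperplane (hz : ‖z‖ = 1) {w : E}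
    (hw : w ∈ tangentHyperplane z) : 2 ≤ dist w (-z) := by
  have hθ := inversion_mem_sphere_of_mem_tangentHyperplane hz hw
  have hθ_dist : dist (inversion (-z) 2 w) (-z) ≤ 1 + 1 := by
    simpa [mem_sphere_zero_iff_norm.1 hθ, hz] using
      dist_triangle_right (inversion (-z) 2 w) (-z) 0
  have hw_pos : 0 < dist w (-z) := dist_pos.2 (ne_antipode_of_mem_tangentHyperplane hz hw)
  rw [dist_inversion_center, div_le_iff₀ hw_pos] at hθ_dist
  linarith

lemma dist_inversion_antipode (hz : ‖z‖ = 1) {p : E} (hp : p ≠ -z) :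
    dist (inversion (-z) 2 p) z = 2 / dist p (-z) * dist p z := by
  have h := dist_inversion_inversion hp (ne_antipode hz) 2
  rw [inversion_antipode_self hz, dist_antipode, hz] at h
  rw [h]
  field

lemma one_le_dist_antipode_of_mem_ball (hz : ‖z‖ = 1) {r : ℝ} (hr : r ≤ 1) {θ : E}
    (hθ : θ ∈ ball z r) : 1 ≤ dist θ (-z) := by
  have := dist_triangle_left z (-z) θ
  rw [dist_antipode, hz] at this
  linarith [mem_ball.1 hθ]

lemma sphere_inter_ball_subset_image_tangentHyperplane (hz : ‖z‖ = 1) {r : ℝ} (hr : r ≤ 1) :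
    sphere 0 1 ∩ ball z r ⊆
      inversion (-z) 2 '' ((tangentHyperplane z : Set E) ∩ ball z (2 * r)) := by
  rintro θ ⟨hθ, hθz⟩
  have hdist : 1 ≤ dist θ (-z) := one_le_dist_antipode_of_mem_ball hz hr hθz
  have hne : θ ≠ -z := dist_pos.1 (by linarith)
  refine ⟨inversion (-z) 2 θ, ⟨(inversion_mem_tangentHyperplane_iff hz hne).2 hθ, ?_⟩,
    inversion_inversion _ two_ne_zero _⟩
  rw [mem_ball, dist_inversion_antipode hz hne]
  calc 2 / dist θ (-z) * dist θ z ≤ 2 * dist θ z := by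
        gcongr
        exact div_le_self zero_le_two hdist
    _ < 2 * r := by gcongr; exact hθz

lemma tangentHyperplane_inter_ball_subset_image_sphere (hz : ‖z‖ = 1) (r : ℝ) :
    (tangentHyperplane z : Set E) ∩ ball z r ⊆ inversion (-z) 2 '' (sphere 0 1 ∩ ball z r) := by
  rintro w ⟨hw, hwz⟩
  refine ⟨inversion (-z) 2 w, ⟨inversion_mem_sphere_of_mem_tangentHyperplane hz hw, ?_⟩,
    inversion_inversion _ two_ne_zero _⟩
  rw [mem_ball, dist_inversion_antipode hz (ne_antipode_of_mem_tangentHyperplane hz hw)]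
  calc 2 / dist w (-z) * dist w z ≤ 1 * dist w z := by
        gcongr
        exact div_le_one_of_le₀ (two_le_dist_antipode_of_mem_tangentHyperplane hz hw) dist_nonneg
    _ < r := by rwa [one_mul]

variable [MeasurableSpace E] [BorelSpace E]

lemma hausdorffMeasure_sphere_inter_ball_le_tangentHyperplane (hz : ‖z‖ = 1) {d : ℝ} (hd : 0 ≤ d)
    {r : ℝ} (hr : r ≤ 1) :
    μH[d] (sphere 0 1 ∩ ball z r) ≤ μH[d] ((tangentHyperplane z : Set E) ∩ ball z (2 * r)) := by
  have hlip :
      LipschitzOnWith 1 (inversion (-z) 2) ((tangentHyperplane z : Set E) ∩ ball z (2 * r)) := by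
    simpa using (lipschitzOnWith_inversion (-z) 2 two_pos).mono fun w hw ↦
      two_le_dist_antipode_of_mem_tangentHyperplane hz hw.1
  simpa using (measure_mono (sphere_inter_ball_subset_image_tangentHyperplane hz hr)).trans
    (hlip.hausdorffMeasure_image_le hd)

lemma hausdorffMeasure_tangentHyperplane_inter_ball_le_sphere (hz : ‖z‖ = 1) {d : ℝ} (hd : 0 ≤ d)
    {r : ℝ} (hr : r ≤ 1) :
    μH[d] ((tangentHyperplane z : Set E) ∩ ball z r) ≤ 4 ^ d * μH[d] (sphere 0 1 ∩ ball z r) := by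
  have hsub : sphere 0 1 ∩ ball z r ⊆ {θ | 1 ≤ dist θ (-z)} := fun θ hθ ↦
    one_le_dist_antipode_of_mem_ball hz hr hθ.2
  have hlip : LipschitzOnWith 4 (inversion (-z) 2) (sphere 0 1 ∩ ball z r) := by
    convert (lipschitzOnWith_inversion (-z) 2 one_pos).mono hsub
    norm_num
  exact (measure_mono (tangentHyperplane_inter_ball_subset_image_sphere hz r)).trans
    (hlip.hausdorffMeasure_image_le hd)

end Sphere

section Regularity

variable {E : Type*} [NormedAddCommGroup E] [InnerProductSpace ℝ E] [MeasurableSpace E]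
  [BorelSpace E] {m : ℕ} [Fact (finrank ℝ E = m + 1)]

lemma hausdorffMeasure_tangentHyperplane_inter_ball {z : E} (hz : ‖z‖ = 1) {r : ℝ} (hr : 0 < r) :
    μH[(m : ℝ)] ((tangentHyperplane z : Set E) ∩ ball z r) =
      ENNReal.ofReal (r ^ m) * μH[(m : ℝ)] (ball (0 : EuclideanSpace ℝ (Fin m)) 1) :=
  have : FiniteDimensional ℝ E := .of_fact_finrank_eq_succ m
  hausdorffMeasure_affineSubspace_inter_ball (finrank_direction_tangentHyperplane hz)
    (self_mem_tangentHyperplane hz) hr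

lemma exists_hausdorffMeasure_sphere_inter_ball_le_of_le_one :
    ∃ K : ℝ≥0, ∀ z ∈ sphere (0 : E) 1, ∀ r, 0 < r → r ≤ 1 →
      μH[(m : ℝ)] (sphere 0 1 ∩ ball z r) ≤ K * ENNReal.ofReal (r ^ m) := by
  have haar := isAddHaarMeasure_hausdorffMeasure_euclideanSpace m
  set ω := μH[(m : ℝ)] (ball (0 : EuclideanSpace ℝ (Fin m)) 1)
  have hω : ω ≠ ∞ := measure_ball_lt_top.ne
  refine ⟨2 ^ m * ω.toNNReal, fun z hz r hr hr1 ↦ ?_⟩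
  have hz1 : ‖z‖ = 1 := mem_sphere_zero_iff_norm.1 hz
  calc μH[(m : ℝ)] (sphere 0 1 ∩ ball z r)
      ≤ μH[(m : ℝ)] ((tangentHyperplane z : Set E) ∩ ball z (2 * r)) :=
        hausdorffMeasure_sphere_inter_ball_le_tangentHyperplane hz1 m.cast_nonneg hr1
    _ = ENNReal.ofReal ((2 * r) ^ m) * ω :=
        hausdorffMeasure_tangentHyperplane_inter_ball hz1 (by positivity)
    _ = (2 ^ m * ω.toNNReal : ℝ≥0) * ENNReal.ofReal (r ^ m) := by
        rw [mul_pow, ENNReal.ofReal_mul (by positivity), ENNReal.ofReal_pow zero_le_two,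
          ENNReal.ofReal_ofNat, ENNReal.coe_mul, ENNReal.coe_toNNReal hω, ENNReal.coe_pow,
          ENNReal.coe_ofNat, mul_right_comm]

lemma hausdorffMeasure_sphere_lt_top : μH[(m : ℝ)] (sphere (0 : E) 1) < ∞ := by
  have : FiniteDimensional ℝ E := .of_fact_finrank_eq_succ m
  obtain ⟨K, hK⟩ := exists_hausdorffMeasure_sphere_inter_ball_le_of_le_one (E := E) (m := m)
  refine (isCompact_sphere (0 : E) 1).measure_lt_top_of_nhdsWithin fun z hz ↦
    ⟨sphere 0 1 ∩ ball z 1, inter_mem_nhdsWithin _ (ball_mem_nhds z one_pos), ?_⟩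
  exact (hK z hz 1 one_pos le_rfl).trans_lt
    (ENNReal.mul_lt_top ENNReal.coe_lt_top ENNReal.ofReal_lt_top)

lemma exists_hausdorffMeasure_sphere_inter_ball_le :
    ∃ K : ℝ≥0, ∀ z ∈ sphere (0 : E) 1, ∀ r, 0 < r →
      μH[(m : ℝ)] (sphere 0 1 ∩ ball z r) ≤ K * ENNReal.ofReal (r ^ m) := by
  obtain ⟨K, hK⟩ := exists_hausdorffMeasure_sphere_inter_ball_le_of_le_one (E := E) (m := m)
  set M := μH[(m : ℝ)] (sphere (0 : E) 1)
  have hM : M ≠ ∞ := hausdorffMeasure_sphere_lt_top.ne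
  refine ⟨max K M.toNNReal, fun z hz r hr ↦ ?_⟩
  rcases le_total r 1 with hr1 | hr1
  · exact (hK z hz r hr hr1).trans (by gcongr; exact le_max_left _ _)
  · calc μH[(m : ℝ)] (sphere 0 1 ∩ ball z r)
        ≤ M.toNNReal * 1 := by
          rw [mul_one, ENNReal.coe_toNNReal hM]
          exact measure_mono inter_subset_left
      _ ≤ (max K M.toNNReal : ℝ≥0) * ENNReal.ofReal (r ^ m) := by
          gcongr
          · exact le_max_right _ _
          · exact ENNReal.one_le_ofReal.2 (one_le_pow₀ hr1)

lemma exists_le_hausdorffMeasure_sphere_inter_ball :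
    ∃ k : ℝ≥0, 0 < k ∧ ∀ z ∈ sphere (0 : E) 1, ∀ r, 0 < r → r ≤ 1 →
      k * ENNReal.ofReal (r ^ m) ≤ μH[(m : ℝ)] (sphere 0 1 ∩ ball z r) := by
  have haar := isAddHaarMeasure_hausdorffMeasure_euclideanSpace m
  set ω := μH[(m : ℝ)] (ball (0 : EuclideanSpace ℝ (Fin m)) 1)
  have hω : ω ≠ ∞ := measure_ball_lt_top.ne
  have hω0 : ω ≠ 0 := (measure_ball_pos _ _ one_pos).ne'
  have hω_pos : 0 < ω.toNNReal := ENNReal.toNNReal_pos hω0 hω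
  refine ⟨(4 ^ m)⁻¹ * ω.toNNReal, by positivity, fun z hz r hr hr1 ↦ ?_⟩
  have hz1 : ‖z‖ = 1 := mem_sphere_zero_iff_norm.1 hz
  have hle : ENNReal.ofReal (r ^ m) * ω ≤ 4 ^ m * μH[(m : ℝ)] (sphere 0 1 ∩ ball z r) := by
    rw [← ENNReal.rpow_natCast, ← hausdorffMeasure_tangentHyperplane_inter_ball hz1 hr]
    exact hausdorffMeasure_tangentHyperplane_inter_ball_le_sphere hz1 m.cast_nonneg hr1
  rw [ENNReal.coe_mul, ENNReal.coe_toNNReal hω, ENNReal.coe_inv (by positivity), ENNReal.coe_pow,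
    ENNReal.coe_ofNat, mul_assoc, mul_comm ω]
  exact (ENNReal.inv_mul_le_iff (by positivity) (by finiteness)).2 hle

end Regularity

section Integral

lemma exists_mem_sphere_dist_eq {E : Type*} [NormedAddCommGroup E] [NormedSpace ℝ E] [Nontrivial E]
    {x : E} (hx : x ∈ closedBall (0 : E) 1) : ∃ z ∈ sphere (0 : E) 1, dist x z = 1 - ‖x‖ := by
  have hx1 : ‖x‖ ≤ 1 := mem_closedBall_zero_iff.1 hx
  obtain ⟨z, hz, hxz⟩ : ∃ z : E, ‖z‖ = 1 ∧ ‖x‖ • z = x := by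
    rcases eq_or_ne x 0 with rfl | hx0
    · obtain ⟨z, hz⟩ := exists_norm_eq E zero_le_one
      exact ⟨z, hz, by simp⟩
    · exact ⟨NormedSpace.normalize x, NormedSpace.norm_normalize hx0,
        NormedSpace.norm_smul_normalize x⟩
  refine ⟨z, mem_sphere_zero_iff_norm.2 hz, ?_⟩
  calc dist x z = ‖(1 - ‖x‖) • z‖ := by rw [dist_comm, dist_eq_norm, sub_smul, one_smul, hxz]
    _ = 1 - ‖x‖ := by rw [norm_smul, hz, mul_one, Real.norm_of_nonneg (sub_nonneg.2 hx1)]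

lemma ae_restrict_sphere_one_sub_norm_le_dist {E : Type*} [NormedAddCommGroup E]
    [MeasurableSpace E] [OpensMeasurableSpace E] (μ : Measure E) (x : E) :
    ∀ᵐ θ ∂μ.restrict (sphere 0 1), 1 - ‖x‖ ≤ dist x θ := by
  filter_upwards [ae_restrict_mem isClosed_sphere.measurableSet] with θ hθ
  rw [← mem_sphere_zero_iff_norm.1 hθ, dist_comm, dist_eq_norm]
  exact norm_sub_norm_le θ x

variable {E : Type*} [NormedAddCommGroup E] [InnerProductSpace ℝ E] [MeasurableSpace E]
  [BorelSpace E] {m : ℕ} [hE : Fact (finrank ℝ E = m + 1)] {s : ℝ}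

lemma exists_lintegral_sphere_dist_rpow_inv_le (hs : m < s) :
    ∃ C : ℝ≥0, ∀ x ∈ ball (0 : E) 1,
      ∫⁻ θ in sphere (0 : E) 1, ENNReal.ofReal ((dist x θ ^ s)⁻¹) ∂μH[(m : ℝ)] ≤
        C * ENNReal.ofReal ((1 - ‖x‖) ^ (m - s)) := by
  have : Nontrivial E := nontrivial_of_finrank_eq_succ hE.out
  obtain ⟨K, hK⟩ := exists_hausdorffMeasure_sphere_inter_ball_le (E := E) (m := m)
  have hs0 : 0 < s := m.cast_nonneg.trans_lt hs
  refine ⟨K * 2 ^ m * (s / (s - m)).toNNReal, fun x hx ↦ ?_⟩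
  have hδ : 0 < 1 - ‖x‖ := sub_pos.2 (mem_ball_zero_iff.1 hx)
  obtain ⟨z, hz, hxz⟩ := exists_mem_sphere_dist_eq (ball_subset_closedBall hx)
  have hball : ∀ r, 1 - ‖x‖ ≤ r → (μH[(m : ℝ)].restrict (sphere 0 1)) (ball x r) ≤
      (K * 2 ^ m : ℝ≥0) * ENNReal.ofReal (r ^ (m : ℝ)) := fun r hr ↦ calc
    (μH[(m : ℝ)].restrict (sphere 0 1)) (ball x r)
      ≤ μH[(m : ℝ)] (sphere 0 1 ∩ ball z (2 * r)) := by
        rw [Measure.restrict_apply measurableSet_ball, inter_comm]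
        gcongr
        exact ball_subset_ball' (by linarith)
    _ ≤ K * ENNReal.ofReal ((2 * r) ^ m) := hK z hz _ (by linarith)
    _ = (K * 2 ^ m : ℝ≥0) * ENNReal.ofReal (r ^ (m : ℝ)) := by
        rw [mul_pow, ENNReal.ofReal_mul (by positivity), ENNReal.ofReal_pow zero_le_two,
          ENNReal.ofReal_ofNat, ENNReal.coe_mul, ENNReal.coe_pow, ENNReal.coe_ofNat,
          rpow_natCast, mul_assoc]
  refine (lintegral_dist_rpow_inv_le hs0 hs hδ hball
    (ae_restrict_sphere_one_sub_norm_le_dist _ x)).trans_eq ?_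
  rw [ENNReal.ofReal_mul (div_pos hs0 (sub_pos.2 hs)).le, ENNReal.coe_mul _ (toNNReal _), mul_assoc]
  rfl

lemma exists_le_lintegral_sphere_dist_rpow_inv (hs : 0 ≤ s) :
    ∃ c : ℝ≥0, 0 < c ∧ ∀ x ∈ ball (0 : E) 1,
      c * ENNReal.ofReal ((1 - ‖x‖) ^ (m - s)) ≤
        ∫⁻ θ in sphere (0 : E) 1, ENNReal.ofReal ((dist x θ ^ s)⁻¹) ∂μH[(m : ℝ)] := by
  have : Nontrivial E := nontrivial_of_finrank_eq_succ hE.out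
  obtain ⟨k, hk, hcap⟩ := exists_le_hausdorffMeasure_sphere_inter_ball (E := E) (m := m)
  refine ⟨(2 ^ s)⁻¹ * k, by positivity, fun x hx ↦ ?_⟩
  set δ := 1 - ‖x‖
  have hδ : 0 < δ := sub_pos.2 (mem_ball_zero_iff.1 hx)
  have hδ1 : δ ≤ 1 := sub_le_self _ (norm_nonneg x)
  obtain ⟨z, hz, hxz⟩ := exists_mem_sphere_dist_eq (ball_subset_closedBall hx)
  calc ((2 ^ s)⁻¹ * k : ℝ≥0) * ENNReal.ofReal (δ ^ (m - s))
      = ENNReal.ofReal (((2 * δ) ^ s)⁻¹) * (k * ENNReal.ofReal (δ ^ m)) := by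
        rw [← ENNReal.ofReal_coe_nnreal, ← ENNReal.ofReal_coe_nnreal (p := k),
          ← ENNReal.ofReal_mul (by positivity), ← ENNReal.ofReal_mul (by positivity),
          ← ENNReal.ofReal_mul (by positivity), rpow_sub hδ, rpow_natCast,
          mul_rpow zero_le_two hδ.le]
        push_cast
        congr 1
        field
    _ ≤ ENNReal.ofReal (((2 * δ) ^ s)⁻¹) * μH[(m : ℝ)] (sphere 0 1 ∩ ball z δ) := by
        gcongr
        exact hcap z hz δ hδ hδ1
    _ ≤ ENNReal.ofReal (((2 * δ) ^ s)⁻¹) *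
          (μH[(m : ℝ)].restrict (sphere 0 1)) (ball x (2 * δ)) := by
        rw [Measure.restrict_apply measurableSet_ball, inter_comm]
        gcongr
        exact ball_subset_ball' (by rw [dist_comm, hxz]; linarith)
    _ ≤ ∫⁻ θ in sphere (0 : E) 1, ENNReal.ofReal ((dist x θ ^ s)⁻¹) ∂μH[(m : ℝ)] :=
        measure_ball_le_lintegral_dist_rpow_inv hs
          ((ae_restrict_sphere_one_sub_norm_le_dist _ x).mono fun _ ↦ hδ.trans_le) _

end Integral

theorem martin_normalization_bounds_general {E : Type*} [NormedAddCommGroup E]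
    [InnerProductSpace ℝ E] [MeasurableSpace E] [BorelSpace E] {m : ℕ}
    [Fact (finrank ℝ E = m + 1)] {s : ℝ} (hs : m < s) :
    ∃ c C : ℝ, 0 < c ∧ c ≤ C ∧ ∀ x ∈ ball (0 : E) 1,
      c ≤ (1 - ‖x‖) ^ (s - m) * ∫ θ in sphere (0 : E) 1, (‖x - θ‖ ^ s)⁻¹ ∂μH[(m : ℝ)] ∧
      (1 - ‖x‖) ^ (s - m) * ∫ θ in sphere (0 : E) 1, (‖x - θ‖ ^ s)⁻¹ ∂μH[(m : ℝ)] ≤ C := by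
  obtain ⟨c, hc, hlower⟩ :=
    exists_le_lintegral_sphere_dist_rpow_inv (E := E) (m := m) (m.cast_nonneg.trans hs.le)
  obtain ⟨C, hupper⟩ := exists_lintegral_sphere_dist_rpow_inv_le (E := E) hs
  suffices bounds : ∀ x ∈ ball (0 : E) 1,
      c ≤ (1 - ‖x‖) ^ (s - m) * ∫ θ in sphere (0 : E) 1, (‖x - θ‖ ^ s)⁻¹ ∂μH[(m : ℝ)] ∧
      (1 - ‖x‖) ^ (s - m) * ∫ θ in sphere (0 : E) 1, (‖x - θ‖ ^ s)⁻¹ ∂μH[(m : ℝ)] ≤ C from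
    have h0 := bounds 0 (mem_ball_self one_pos)
    ⟨c, C, hc, h0.1.trans h0.2, bounds⟩
  intro x hx
  have hδ : 0 < 1 - ‖x‖ := sub_pos.2 (mem_ball_zero_iff.1 hx)
  have hC : C * ENNReal.ofReal ((1 - ‖x‖) ^ (m - s)) ≠ ∞ := by finiteness
  have lower := ENNReal.toReal_mono (ne_top_of_le_ne_top hC (hupper x hx)) (hlower x hx)
  have upper := ENNReal.toReal_mono hC (hupper x hx)
  simp only [← dist_eq_norm]
  rw [integral_eq_lintegral_of_nonneg_ae (ae_of_all _ fun θ ↦ by positivity)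
    (measurable_dist_rpow_inv x s).aestronglyMeasurable]
  rw [ENNReal.toReal_mul, ENNReal.coe_toReal, ENNReal.toReal_ofReal (by positivity),
    ← neg_sub s, rpow_neg hδ.le, ← div_eq_mul_inv] at lower upper
  exact ⟨(div_le_iff₀' (rpow_pos_of_pos hδ _)).1 lower,
    (le_div_iff₀' (rpow_pos_of_pos hδ _)).1 upper⟩

/-- For `n ≥ 2` there exist `0 < c ≤ C` such that for every `x` in the open unit ball,
`c ≤ (1−|x|)·∫_{∂B} |x−θ|^{−n} dH^{n−1}(θ) ≤ C`. -/
theorem martin_normalization_bounds (n : ℕ) (hn : 2 ≤ n) :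
    ∃ c C : ℝ, 0 < c ∧ c ≤ C ∧
      ∀ x ∈ Metric.ball (0 : EuclideanSpace ℝ (Fin n)) 1,
        c ≤ (1 - ‖x‖) *
            (∫ θ in Metric.sphere (0 : EuclideanSpace ℝ (Fin n)) 1,
              (‖x - θ‖ ^ n)⁻¹ ∂(μH[(n : ℝ) - 1])) ∧
        (1 - ‖x‖) *
            (∫ θ in Metric.sphere (0 : EuclideanSpace ℝ (Fin n)) 1,
              (‖x - θ‖ ^ n)⁻¹ ∂(μH[(n : ℝ) - 1])) ≤ C := by
  obtain ⟨m, rfl⟩ := Nat.exists_eq_add_of_le' (one_le_two.trans hn)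
  have : Fact (finrank ℝ (EuclideanSpace ℝ (Fin (m + 1))) = m + 1) := ⟨finrank_euclideanSpace_fin⟩
  have hdim : ((m + 1 : ℕ) : ℝ) - 1 = m := by simp
  have hexp : ((m + 1 : ℕ) : ℝ) - m = 1 := by simp
  have bounds := martin_normalization_bounds_general (E := EuclideanSpace ℝ (Fin (m + 1)))
    (m := m) (s := (m + 1 : ℕ)) (by simp)
  simp only [hexp, rpow_one, rpow_natCast] at bounds
  rwa [hdim]
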